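/- arXiv:2104.09980 — 2 statements merged into one kernel-verified Lean document; each statement's English description precedes it below -/
import Mathlib

section
/- With R_L(t) = Σ_{ℓ=0}^{L} Q_ℓ(t) and L ≥ 1, ∫_{−1}^{1} R_L(t)² t² (1−t²)^{d/2−1} dt = (|S^d|/|S^{d−1}|) [ d(L+1)/(L(d+2L+1)) + (d+4L−2)/(d+2L−1) ] C(d+L−1,d). -/
open intervalIntegral Real Finset

/-- Gegenbauer (ultraspherical) polynomials `C_ℓ^{(λ)}`, via the standard recurrence. -/
noncomputable def gegenbauer (lam : ℝ) : ℕ → ℝ → ℝ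
  | 0 => fun _ => 1
  | 1 => fun t => 2 * lam * t
  | (n + 2) => fun t =>
      (2 * ((n : ℝ) + 1 + lam) * t * gegenbauer lam (n + 1) t
        - ((n : ℝ) + 2 * lam) * gegenbauer lam n t) / ((n : ℝ) + 2)

/-- Normalized Gegenbauer polynomial `Q_ℓ(t) = ((d+2ℓ−1)/(d−1)) C_ℓ^{((d−1)/2)}(t)`. -/
noncomputable def Q (d : ℕ) (ℓ : ℕ) (t : ℝ) : ℝ :=
  ((d : ℝ) + 2 * ℓ - 1) / ((d : ℝ) - 1) * gegenbauer (((d : ℝ) - 1) / 2) ℓ t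

/-- Coefficient `a_k = k/(d+2k−1)`. -/
noncomputable def aCoeff (d : ℕ) (k : ℤ) : ℝ := (k : ℝ) / ((d : ℝ) + 2 * k - 1)

/-- Coefficient `b_k = 1 − a_k` for `k ≥ 0`, with the convention `b_{−1} = 0`
(note `b_0 = 1 − a_0 = 1`). -/
noncomputable def bCoeff (d : ℕ) (k : ℤ) : ℝ := if k < 0 then 0 else 1 - aCoeff d k

/-- `Z(d,ℓ) = C(d+ℓ,d) − C(d+ℓ−2,d)`, the dimension of the degree-`ℓ` spherical harmonics. -/
noncomputable def Zdim (d ℓ : ℕ) : ℝ := (Nat.choose (d + ℓ) d : ℝ) - (Nat.choose (d + ℓ - 2) d : ℝ)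

/-- `Z(d,ℓ)` for integer `ℓ`, zero for negative `ℓ`. -/
noncomputable def ZdimZ (d : ℕ) (k : ℤ) : ℝ := if k < 0 then 0 else Zdim d k.toNat

/-- Surface area `|S^d| = 2π^{(d+1)/2}/Γ((d+1)/2)`. -/
noncomputable def surfaceArea (d : ℕ) : ℝ :=
  2 * Real.pi ^ (((d : ℝ) + 1) / 2) / Real.Gamma (((d : ℝ) + 1) / 2)

/-- `R_L(t) = Σ_{ℓ=0}^{L} Q_ℓ(t)`, the reproducing kernel of `𝒫_L(S^d)`. -/
noncomputable def R (d L : ℕ) (t : ℝ) : ℝ := ∑ ℓ ∈ Finset.range (L + 1), Q d ℓ t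


section helpers
open Polynomial

/-- polynomial version -/
noncomputable def gegP (lam : ℝ) : ℕ → ℝ[X]
  | 0 => 1
  | 1 => C (2 * lam) * X
  | (n + 2) => C (1 / ((n : ℝ) + 2)) * (C (2 * ((n : ℝ) + 1 + lam)) * X * gegP lam (n + 1)
        - C ((n : ℝ) + 2 * lam) * gegP lam n)

lemma gegP_eval (lam t : ℝ) : ∀ n, (gegP lam n).eval t = gegenbauer lam n t
  | 0 => by simp [gegP, gegenbauer]
  | 1 => by simp [gegP, gegenbauer]
  | (n + 2) => by
    have h1 := gegP_eval lam t (n + 1)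
    have h2 := gegP_eval lam t n
    simp only [gegP, gegenbauer, eval_mul, eval_sub, eval_C, eval_X, h1, h2]
    ring

lemma gegP_rec (lam : ℝ) (n : ℕ) : C ((n : ℝ) + 2) * gegP lam (n + 2) =
    C (2 * ((n : ℝ) + 1 + lam)) * X * gegP lam (n + 1) - C ((n : ℝ) + 2 * lam) * gegP lam n := by
  rw [gegP, ← mul_assoc, ← C_mul]
  have : ((n : ℝ) + 2) * (1 / ((n : ℝ) + 2)) = 1 := by
    have : (n : ℝ) + 2 ≠ 0 := by positivity
    field_simp
  rw [this]; simp

lemma gegP_rec' (lam t : ℝ) (n : ℕ) : ((n : ℝ) + 2) * (gegP lam (n + 2)).eval t =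
    (2 * ((n : ℝ) + 1 + lam)) * t * (gegP lam (n + 1)).eval t
      - ((n : ℝ) + 2 * lam) * (gegP lam n).eval t := by
  have := congrArg (eval t) (gegP_rec lam n)
  simpa using this

lemma gegP_rec_deriv (lam t : ℝ) (n : ℕ) :
    ((n : ℝ) + 2) * (derivative (gegP lam (n + 2))).eval t =
    (2 * ((n : ℝ) + 1 + lam)) * ((gegP lam (n + 1)).eval t
      + t * (derivative (gegP lam (n + 1))).eval t)
      - ((n : ℝ) + 2 * lam) * (derivative (gegP lam n)).eval t := by
  have := congrArg (fun p => eval t (derivative p)) (gegP_rec lam n)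
  simp only [derivative_mul, derivative_sub, derivative_C, derivative_X, eval_mul, eval_sub,
    eval_add, eval_C, eval_X, eval_zero, eval_one] at this
  linarith

lemma gegP_id (lam t : ℝ) (n : ℕ) :
    (1 - t ^ 2) * (derivative (gegP lam (n + 1))).eval t =
      ((n : ℝ) + 2 * lam) * (gegP lam n).eval t - ((n : ℝ) + 1) * t * (gegP lam (n + 1)).eval t ∧
    (1 - t ^ 2) * (derivative (gegP lam n)).eval t =
      ((n : ℝ) + 2 * lam) * t * (gegP lam n).eval t - ((n : ℝ) + 1) * (gegP lam (n + 1)).eval t := by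
  induction n with
  | zero =>
    constructor
    · simp [gegP]; ring
    · simp [gegP]
  | succ n ih =>
    obtain ⟨h1, h2⟩ := ih
    have r := gegP_rec' lam t n
    have rd := gegP_rec_deriv lam t n
    push_cast
    refine ⟨?_, ?_⟩
    · have hn : (n : ℝ) + 2 ≠ 0 := by positivity
      apply mul_left_cancel₀ hn
      show _ * (_ * (derivative (gegP lam (n + 2))).eval t) =
        _ * (_ - _ * (gegP lam (n + 2)).eval t)
      linear_combination (1 - t ^ 2) * rd + 2 * ((n : ℝ) + 1 + lam) * t * h1
        - ((n : ℝ) + 2 * lam) * h2 + (n + 2) * t * r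
    · show _ = _ - _ * (gegP lam (n + 2)).eval t
      linear_combination h1 + r

lemma gegP_ode (lam t : ℝ) (ht : 1 - t ^ 2 ≠ 0) (n : ℕ) :
    (1 - t ^ 2) * (derivative (derivative (gegP lam n))).eval t
      - (2 * lam + 1) * t * (derivative (gegP lam n)).eval t
      + n * (n + 2 * lam) * (gegP lam n).eval t = 0 := by
  have hpoly : (1 - X ^ 2) * derivative (gegP lam n) =
      C ((n : ℝ) + 2 * lam) * X * gegP lam n - C ((n : ℝ) + 1) * gegP lam (n + 1) := by
    apply Polynomial.funext
    intro s
    simpa using (gegP_id lam s n).2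
  have hd := congrArg (fun p => eval t (derivative p)) hpoly
  simp only [derivative_mul, derivative_sub, derivative_C, derivative_X, derivative_X_pow,
    derivative_one, eval_mul, eval_sub,
    eval_add, eval_C, eval_X, eval_zero, eval_one, eval_pow] at hd
  obtain ⟨h1, h2⟩ := gegP_id lam t n
  apply mul_left_cancel₀ ht
  norm_num at hd
  linear_combination (1 - t ^ 2) * hd - (n + 1) * h1 + (n + 1) * t * h2

noncomputable def wt (e : ℕ) (t : ℝ) : ℝ := (1 - t ^ 2) ^ ((e : ℝ) / 2)

lemma wt_cont (e : ℕ) : Continuous (wt e) := by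
  unfold wt
  apply Continuous.rpow_const (by fun_prop)
  intro x; right; positivity

noncomputable def LL (e : ℕ) : ℝ[X] →ₗ[ℝ] ℝ where
  toFun p := ∫ t in (-1 : ℝ)..1, p.eval t * wt e t
  map_add' p q := by
    have hw := wt_cont e
    rw [← intervalIntegral.integral_add]
    · simp only [eval_add, add_mul]
    · exact (p.continuous.mul hw).intervalIntegrable _ _
    · exact (q.continuous.mul hw).intervalIntegrable _ _
  map_smul' r p := by
    simp only [eval_smul, smul_eq_mul, RingHom.id_apply, mul_assoc]
    rw [intervalIntegral.integral_const_mul]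

lemma LL_apply (e : ℕ) (p : ℝ[X]) : LL e p = ∫ t in (-1 : ℝ)..1, p.eval t * wt e t := rfl

lemma LL_geg (e n : ℕ) : LL e (gegP (((e : ℝ) + 1) / 2) (n + 1)) = 0 := by
  set lam : ℝ := ((e : ℝ) + 1) / 2 with hlam
  set p := gegP lam (n + 1) with hp
  have hw := wt_cont e
  have key : ∫ t in (-1 : ℝ)..1, -(((n : ℝ) + 1) * (n + 1 + 2 * lam)) * (p.eval t * wt e t) = 0 := by
    have hF : ContinuousOn (fun t : ℝ => (1 - t ^ 2) * wt e t * (derivative p).eval t)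
        (Set.Icc (-1) 1) := by
      apply Continuous.continuousOn
      exact ((by fun_prop : Continuous fun t : ℝ => 1 - t ^ 2).mul hw).mul
        (derivative p).continuous
    have := intervalIntegral.integral_eq_sub_of_hasDerivAt_of_le (by norm_num : (-1 : ℝ) ≤ 1) hF
      (f' := fun t => -(((n : ℝ) + 1) * (n + 1 + 2 * lam)) * (p.eval t * wt e t)) ?_ ?_
    · rw [this]; norm_num
    · intro t ht
      have hpos : 0 < 1 - t ^ 2 := by nlinarith [ht.1, ht.2]
      have h0 : HasDerivAt (fun t : ℝ => 1 - t ^ 2) (-(2 * t)) t := by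
        simpa using (hasDerivAt_pow 2 t).const_sub 1
      have h1 : HasDerivAt (wt e) (-(2 * t) * ((e : ℝ) / 2) * (1 - t ^ 2) ^ ((e : ℝ) / 2 - 1)) t :=
        h0.rpow_const (Or.inl hpos.ne')
      have h2 := (h0.mul h1).mul ((derivative p).hasDerivAt t)
      refine h2.congr_deriv ?_
      have hr : (1 - t ^ 2) * (1 - t ^ 2) ^ ((e : ℝ) / 2 - 1) = wt e t := by
        rw [wt, Real.rpow_sub_one hpos.ne']; field_simp
      have ode := gegP_ode lam t hpos.ne' (n + 1)
      rw [← hp] at ode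
      push_cast at ode
      simp only [Pi.mul_apply]
      have hl : (e : ℝ) = 2 * lam - 1 := by rw [hlam]; ring
      have hr' : (1 - t ^ 2) * (-(2 * t) * ((e : ℝ) / 2) * (1 - t ^ 2) ^ ((e : ℝ) / 2 - 1))
          = -(2 * t) * (lam - 1 / 2) * wt e t := by
        rw [← hr]
        have : (e : ℝ) / 2 = lam - 1 / 2 := by rw [hl]; ring
        rw [this]
        ring
      rw [hr']
      linear_combination (wt e t) * ode
    · exact (continuous_const.mul (p.continuous.mul hw)).intervalIntegrable _ _
  rw [intervalIntegral.integral_const_mul, ← LL_apply] at key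
  have : -(((n : ℝ) + 1) * (n + 1 + 2 * lam)) ≠ 0 := by
    have : 0 < lam := by rw [hlam]; positivity
    have : 0 < (((n : ℝ) + 1) * (n + 1 + 2 * lam)) := by positivity
    linarith
  exact (mul_eq_zero.mp key).resolve_left this

/-- normalized -/
noncomputable def qP (e n : ℕ) : ℝ[X] :=
  (((e : ℝ) + 1 + 2 * n) / ((e : ℝ) + 1)) • gegP (((e : ℝ) + 1) / 2) n

noncomputable def aa (e n : ℕ) : ℝ := (n : ℝ) / ((e : ℝ) + 1 + 2 * n)
noncomputable def bb (e n : ℕ) : ℝ := ((e : ℝ) + 1 + n) / ((e : ℝ) + 1 + 2 * n)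

lemma qP_zero (e : ℕ) : qP e 0 = 1 := by
  have : (e : ℝ) + 1 ≠ 0 := by positivity
  simp [qP, gegP, div_self this]

lemma qP_eval (e n : ℕ) (t : ℝ) : (qP e n).eval t = Q (e + 2) n t := by
  simp only [qP, Q, eval_smul, gegP_eval, smul_eq_mul]
  push_cast
  have h1 : (e : ℝ) + 2 - 1 = e + 1 := by ring
  have h2 : (e : ℝ) + 2 + 2 * n - 1 = e + 1 + 2 * n := by ring
  rw [h1, h2]

lemma X_q0 (e : ℕ) : X * qP e 0 = aa e 1 • qP e 1 := by
  apply Polynomial.funext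
  intro t
  have : (e : ℝ) + 1 ≠ 0 := by positivity
  have : (e : ℝ) + 1 + 2 ≠ 0 := by positivity
  simp [qP, gegP, aa]
  field_simp

lemma X_q (e n : ℕ) : X * qP e (n + 1) = aa e (n + 2) • qP e (n + 2) + bb e n • qP e n := by
  apply Polynomial.funext
  intro t
  have r := gegP_rec' (((e : ℝ) + 1) / 2) t n
  have h0 : (e : ℝ) + 1 ≠ 0 := by positivity
  have h1 : (e : ℝ) + 1 + 2 * n ≠ 0 := by positivity
  have h2 : (e : ℝ) + 1 + 2 * (n + 2) ≠ 0 := by positivity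
  simp only [qP, aa, bb, eval_mul, eval_X, eval_add, eval_smul, smul_eq_mul]
  push_cast
  field_simp
  linear_combination -r

noncomputable def zz (e n : ℕ) : ℝ := (((e : ℝ) + 1 + 2 * n) / ((e : ℝ) + 1)) * (n + e).choose e

lemma choose_rec (e n : ℕ) : ((n : ℝ) + 1) * ((n + 1 + e).choose e : ℝ) =
    (n + e + 1) * (n + e).choose e := by
  have := Nat.choose_mul_succ_eq (n + e) e
  have h2 : n + e + 1 - e = n + 1 := by omega
  rw [h2] at this
  have h3 : n + e + 1 = n + 1 + e := by ring
  rw [h3] at this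
  have h4 : (((n + e).choose e * (n + 1 + e) : ℕ) : ℝ) = (((n + 1 + e).choose e * (n + 1) : ℕ) : ℝ) := by
    rw [this]
  push_cast at h4
  linarith

lemma zz_rec (e n : ℕ) : aa e (n + 1) * zz e (n + 1) = bb e n * zz e n := by
  have r := choose_rec e n
  have h0 : (e : ℝ) + 1 ≠ 0 := by positivity
  have h1 : (e : ℝ) + 1 + 2 * n ≠ 0 := by positivity
  have h2 : (e : ℝ) + 1 + 2 * (n + 1) ≠ 0 := by positivity
  simp only [aa, bb, zz]
  push_cast
  field_simp
  linear_combination r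

lemma aa_ne (e n : ℕ) : aa e (n + 1) ≠ 0 := by
  unfold aa; positivity

lemma LL_q (e n : ℕ) : LL e (qP e n) = if n = 0 then LL e 1 else 0 := by
  cases n with
  | zero => simp [qP_zero]
  | succ n => rw [qP, map_smul, LL_geg]; simp

lemma LL_qq (e : ℕ) : ∀ m n, LL e (qP e m * qP e n) = if m = n then LL e 1 * zz e m else 0
  | 0, n => by
    have : zz e 0 = 1 := by
      have : (e : ℝ) + 1 ≠ 0 := by positivity
      simp [zz, div_self this]
    rw [qP_zero, one_mul, LL_q, this]
    simp [eq_comm]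
  | 1, n => by
    apply mul_left_cancel₀ (aa_ne e 0)
    have h : aa e 1 * LL e (qP e 1 * qP e n) = LL e (X * qP e n) := by
      rw [← smul_eq_mul, ← map_smul, ← smul_mul_assoc, ← X_q0, qP_zero, mul_one]
    have hz : zz e 0 = 1 := by
      have : (e : ℝ) + 1 ≠ 0 := by positivity
      simp [zz, div_self this]
    have hr := zz_rec e 0
    show aa e 1 * _ = aa e 1 * _
    rw [h]
    cases n with
    | zero => rw [X_q0, map_smul, LL_q]; simp
    | succ n =>
      rw [X_q, map_add, map_smul, map_smul, LL_q, LL_q]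
      rcases Nat.eq_zero_or_pos n with rfl | hn
      · simp only [zero_add] at hr
        simp
        rw [hz] at hr
        linear_combination (-LL e 1) * hr
      · have h1 : n ≠ 0 := by omega
        simp [h1, Ne.symm h1]
  | (m + 2), n => by
    have ih0 := LL_qq e m
    have ih1 := LL_qq e (m + 1)
    apply mul_left_cancel₀ (aa_ne e (m + 1))
    show aa e (m + 2) * _ = aa e (m + 2) * _
    have h : aa e (m + 2) * LL e (qP e (m + 2) * qP e n) =
        LL e (qP e (m + 1) * (X * qP e n)) - bb e m * LL e (qP e m * qP e n) := by
      have : qP e (m + 1) * (X * qP e n) = aa e (m + 2) • (qP e (m + 2) * qP e n)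
          + bb e m • (qP e m * qP e n) := by
        rw [← smul_mul_assoc, ← smul_mul_assoc, ← add_mul, ← X_q]; ring
      rw [this, map_add, map_smul, map_smul, smul_eq_mul, smul_eq_mul]; ring
    rw [h]
    cases n with
    | zero =>
      rw [X_q0, mul_smul_comm, map_smul, ih1, ih0]
      rcases Nat.eq_zero_or_pos m with rfl | hn
      · have hr := zz_rec e 0
        simp only [zero_add] at hr
        simp
        linear_combination (LL e 1) * hr
      · have h1 : m ≠ 0 := by omega
        simp [h1]
    | succ n =>
      rw [X_q, mul_add, mul_smul_comm, mul_smul_comm, map_add, map_smul, map_smul,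
        ih1, ih1, ih0]
      have hr := zz_rec e (m + 1)
      have hr' := zz_rec e m
      by_cases c1 : m = n + 1
      · subst c1
        have hr := zz_rec e (n + 1)
        rw [if_neg (show ¬ (n + 1 + 1 = n) by omega)]
        simp
        linear_combination (LL e 1) * hr
      · by_cases c2 : m + 1 = n
        · subst c2
          rw [if_neg c1]
          simp
          linear_combination (-LL e 1) * hr
        · have : m + 1 ≠ n + 2 := by omega
          have : m + 2 ≠ n + 1 := by omega
          simp [*]

noncomputable def RP (e m : ℕ) : ℝ[X] := ∑ k ∈ range (m + 1), qP e k

lemma RP_eval (e m : ℕ) (t : ℝ) : (RP e m).eval t = R (e + 2) m t := by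
  simp [RP, R, eval_finsetSum, qP_eval]

lemma RP_succ (e m : ℕ) : RP e (m + 1) = RP e m + qP e (m + 1) := by
  rw [RP, sum_range_succ]; rfl

lemma aabb (e n : ℕ) : aa e n + bb e n = 1 := by
  have h1 : (e : ℝ) + 1 + 2 * n ≠ 0 := by positivity
  unfold aa bb
  field_simp
  ring

lemma X_RP (e m : ℕ) : X * RP e (m + 1) =
    RP e m + aa e (m + 1) • qP e (m + 1) + aa e (m + 2) • qP e (m + 2) := by
  induction m with
  | zero =>
    rw [RP_succ, mul_add, X_q]
    have hb : bb e 0 = 1 := by have := aabb e 0; simpa [aa] using this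
    simp only [RP, zero_add, sum_range_one]
    rw [X_q0, hb, one_smul]; abel
  | succ m ih =>
    rw [RP_succ, mul_add, ih, X_q, RP_succ]
    have : qP e (m + 1) = aa e (m + 1) • qP e (m + 1) + bb e (m + 1) • qP e (m + 1) := by
      rw [← add_smul, aabb, one_smul]
    linear_combination -this

lemma LL_Rq (e m j : ℕ) (h : m < j) : LL e (RP e m * qP e j) = 0 := by
  rw [RP, sum_mul, map_sum]
  apply sum_eq_zero
  intro k hk
  rw [LL_qq, if_neg]
  have := mem_range.mp hk
  omega

lemma LL_RR (e m : ℕ) : LL e (RP e m * RP e m) = LL e 1 * ∑ k ∈ range (m + 1), zz e k := by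
  induction m with
  | zero => simp [RP, LL_qq]
  | succ m ih =>
    have : RP e (m + 1) * RP e (m + 1) = RP e m * RP e m + (2 : ℝ) • (RP e m * qP e (m + 1))
      + qP e (m + 1) * qP e (m + 1) := by
      rw [RP_succ, two_smul]; ring
    rw [this, map_add, map_add, map_smul, ih, LL_Rq _ _ _ (Nat.lt_succ_self m), LL_qq,
      sum_range_succ _ (m + 1)]
    simp; ring

lemma LL_main (e m : ℕ) : LL e ((X * RP e (m + 1)) ^ 2) = LL e 1 *
    (∑ k ∈ range (m + 1), zz e k + aa e (m + 1) ^ 2 * zz e (m + 1)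
      + aa e (m + 2) ^ 2 * zz e (m + 2)) := by
  have : (X * RP e (m + 1)) ^ 2 = RP e m * RP e m
      + (aa e (m + 1) * aa e (m + 1)) • (qP e (m + 1) * qP e (m + 1))
      + (aa e (m + 2) * aa e (m + 2)) • (qP e (m + 2) * qP e (m + 2))
      + (2 * aa e (m + 1)) • (RP e m * qP e (m + 1))
      + (2 * aa e (m + 2)) • (RP e m * qP e (m + 2))
      + (2 * aa e (m + 1) * aa e (m + 2)) • (qP e (m + 1) * qP e (m + 2)) := by
    rw [X_RP]
    simp only [smul_eq_C_mul, C_mul]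
    have : (C (2 : ℝ)) = (2 : ℝ[X]) := rfl
    rw [this]
    ring
  rw [this]
  simp only [map_add, map_smul, smul_eq_mul]
  rw [LL_RR, LL_Rq _ _ _ (by omega), LL_Rq _ _ _ (by omega), LL_qq, LL_qq, LL_qq]
  simp
  ring

lemma chooseB (e m : ℕ) : ((m + e).choose e : ℝ) * ((m + e + 1) * (m + e + 2)) =
    ((m + e + 2).choose (e + 2) : ℝ) * ((e + 1) * (e + 2)) := by
  have h1 := Nat.add_one_mul_choose_eq (m + e) e
  have h2 := Nat.add_one_mul_choose_eq (m + e + 1) (e + 1)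
  have h1' : ((m : ℝ) + e + 1) * (m + e).choose e = (m + e + 1).choose (e + 1) * (e + 1) := by
    exact_mod_cast h1
  have h2' : ((m : ℝ) + e + 1 + 1) * (m + e + 1).choose (e + 1) =
      (m + e + 2).choose (e + 2) * (e + 1 + 1) := by
    exact_mod_cast h2
  linear_combination ((m : ℝ) + e + 2) * h1' + (e + 1) * h2'

lemma sum_zz (e m : ℕ) : ∑ k ∈ range (m + 1), zz e k =
    ((m + e + 2).choose (e + 2) : ℝ) * ((2 * m + e + 2) / (m + e + 2)) := by
  induction m with
  | zero =>
    have h : (e : ℝ) + 1 ≠ 0 := by positivity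
    have h' : (e : ℝ) + 2 ≠ 0 := by positivity
    simp [zz, div_self h, div_self h']
  | succ m ih =>
    rw [sum_range_succ, ih, zz]
    have c1 := chooseB e m
    have c2 := chooseB e (m + 1)
    have c3 := choose_rec e m
    push_cast at c2 ⊢
    have h1 : (m : ℝ) + e + 2 ≠ 0 := by positivity
    have h2 : (m : ℝ) + 1 + e + 2 ≠ 0 := by positivity
    have h3 : (e : ℝ) + 1 ≠ 0 := by positivity
    have h4 : (e : ℝ) + 2 ≠ 0 := by positivity
    have h5 : (m : ℝ) + 1 ≠ 0 := by positivity
    have h6 : (m : ℝ) + e + 1 ≠ 0 := by positivity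
    have h7 : (m : ℝ) + 1 + e + 1 ≠ 0 := by positivity
    have e1 : ((m + e + 2).choose (e + 2) : ℝ) = ((m + e).choose e : ℝ) * ((m + e + 1) * (m + e + 2))
      / ((e + 1) * (e + 2)) := by rw [c1]; field_simp
    have e2 : ((m + 1 + e).choose e : ℝ) = (m + e + 1) * ((m + e).choose e : ℝ) / (m + 1) := by
      rw [← c3]; field_simp
    have e3 : ((m + 1 + e + 2).choose (e + 2) : ℝ) = ((m + 1 + e).choose e : ℝ) *
      ((m + 1 + e + 1) * (m + 1 + e + 2)) / ((e + 1) * (e + 2)) := by rw [c2]; field_simp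
    rw [e3, e2, e1]
    field_simp
    ring

lemma final_alg (e m : ℕ) : ∑ k ∈ range (m + 1), zz e k + aa e (m + 1) ^ 2 * zz e (m + 1)
      + aa e (m + 2) ^ 2 * zz e (m + 2) =
    (((e : ℝ) + 2) * (m + 1 + 1) / ((m + 1) * (e + 2 + 2 * (m + 1) + 1)) +
      ((e : ℝ) + 2 + 4 * (m + 1) - 2) / ((e : ℝ) + 2 + 2 * (m + 1) - 1)) *
      ((m + e + 2).choose (e + 2) : ℝ) := by
  rw [sum_zz]
  have c1 := chooseB e m
  have c3 := choose_rec e m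
  have c4 := choose_rec e (m + 1)
  have h1 : (m : ℝ) + e + 2 ≠ 0 := by positivity
  have h3 : (e : ℝ) + 1 ≠ 0 := by positivity
  have h4 : (e : ℝ) + 2 ≠ 0 := by positivity
  have h5 : (m : ℝ) + 1 ≠ 0 := by positivity
  have h5' : (m : ℝ) + 2 ≠ 0 := by positivity
  have h6 : (m : ℝ) + e + 1 ≠ 0 := by positivity
  have e1 : ((m + e + 2).choose (e + 2) : ℝ) = ((m + e).choose e : ℝ) * ((m + e + 1) * (m + e + 2))
      / ((e + 1) * (e + 2)) := by rw [c1]; field_simp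
  have e2 : ((m + 1 + e).choose e : ℝ) = (m + e + 1) * ((m + e).choose e : ℝ) / (m + 1) := by
    rw [← c3]; field_simp
  have e3 : ((m + 2 + e).choose e : ℝ) = (m + e + 2) * ((m + 1 + e).choose e : ℝ) / (m + 2) := by
    push_cast at c4
    have c5 : ((m : ℝ) + 2) * ((m + 2 + e).choose e : ℝ) = (m + e + 2) * ((m + 1 + e).choose e : ℝ) := by
      linear_combination c4
    rw [← c5]; field_simp
  simp only [zz, aa]
  rw [e3, e2, e1]
  push_cast
  have k1 : (e : ℝ) + 1 + 2 * (m + 1) ≠ 0 := by positivity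
  have k2 : (e : ℝ) + 1 + 2 * (m + 2) ≠ 0 := by positivity
  have k3 : (e : ℝ) + 2 + 2 * (m + 1) + 1 = (e : ℝ) + 1 + 2 * (m + 2) := by ring
  have k4 : (e : ℝ) + 2 + 2 * (m + 1) - 1 = (e : ℝ) + 1 + 2 * (m + 1) := by ring
  rw [k3, k4]
  field_simp
  ring

lemma LL_one_rec (e : ℕ) : LL (e + 2) 1 = ((e : ℝ) + 2) / (e + 3) * LL e 1 := by
  have h := LL_geg e 1
  have h2 : gegP (((e : ℝ) + 1) / 2) (1 + 1) =
      (((e : ℝ) + 1) / 2) • ((((e : ℝ) + 3)) • X ^ 2 - (1 : ℝ[X])) := by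
    apply Polynomial.funext
    intro t
    simp [gegP]
    ring
  rw [h2, map_smul, map_sub, map_smul] at h
  have h3 : (((e : ℝ) + 1) / 2) ≠ 0 := by positivity
  simp only [smul_eq_mul] at h
  have h4 := (mul_eq_zero.mp h).resolve_left h3
  have h5 : LL (e + 2) 1 = LL e (1 - X ^ 2) := by
    rw [LL_apply, LL_apply]
    apply intervalIntegral.integral_congr
    intro t ht
    rw [Set.uIcc_of_le (by norm_num)] at ht
    have hpos : 0 ≤ 1 - t ^ 2 := by nlinarith [ht.1, ht.2]
    simp only [wt, eval_one, eval_sub, eval_pow, eval_X]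
    push_cast
    rw [show ((e : ℝ) + 2) / 2 = (e : ℝ) / 2 + 1 by ring,
      Real.rpow_add_one' hpos (by positivity)]
    ring
  rw [h5, map_sub]
  have : (e : ℝ) + 3 ≠ 0 := by positivity
  field_simp
  linear_combination -h4

lemma LL_one (e : ℕ) : LL e 1 = surfaceArea (e + 2) / surfaceArea (e + 1) := by
  induction e using Nat.twoStepInduction with
  | zero =>
    rw [LL_apply]
    simp only [wt, surfaceArea]
    norm_num
    rw [show (3 / 2 : ℝ) = 1 / 2 + 1 by norm_num, Real.Gamma_add_one (by norm_num),
      Real.Gamma_one_half_eq, Real.rpow_add_one Real.pi_pos.ne', ← Real.sqrt_eq_rpow]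
    have := Real.sqrt_pos.mpr Real.pi_pos
    field_simp
  | one =>
    rw [LL_apply]
    have : ∀ t : ℝ, eval t (1 : ℝ[X]) * wt 1 t = √(1 - t ^ 2) := by
      intro t; simp [wt, Real.sqrt_eq_rpow]
    simp only [this, integral_sqrt_one_sub_sq, surfaceArea]
    norm_num
    rw [show (3 / 2 : ℝ) = 1 / 2 + 1 by norm_num, Real.Gamma_add_one (by norm_num),
      Real.Gamma_one_half_eq, Real.rpow_add_one Real.pi_pos.ne', ← Real.sqrt_eq_rpow]
    have := Real.sqrt_pos.mpr Real.pi_pos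
    field_simp
  | more e ih _ =>
    have hs : ∀ k : ℕ, surfaceArea (k + 2) = surfaceArea k * (2 * Real.pi / (k + 1)) := by
      intro k
      simp only [surfaceArea]
      push_cast
      have : ((k : ℝ) + 1) / 2 ≠ 0 := by positivity
      rw [show ((k : ℝ) + 2 + 1) / 2 = (k + 1) / 2 + 1 by ring, Real.Gamma_add_one this,
        Real.rpow_add_one Real.pi_pos.ne']
      have := Real.Gamma_pos_of_pos (by positivity : 0 < ((k : ℝ) + 1) / 2)
      field_simp
    rw [LL_one_rec, ih, hs (e + 2), show e + 2 + 1 = e + 1 + 2 by ring, hs (e + 1)]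
    have hp : 0 < surfaceArea (e + 1) := by
      unfold surfaceArea
      have := Real.Gamma_pos_of_pos (by positivity : 0 < (((e + 1 : ℕ) : ℝ) + 1) / 2)
      have := Real.pi_pos
      positivity
    have := Real.pi_pos
    push_cast
    have e1 : (e : ℝ) + 2 + 1 = e + 3 := by ring
    have e2 : (e : ℝ) + 1 + 1 = e + 2 := by ring
    rw [e1, e2]
    field_simp

end helpers

theorem integral_R_sq_t_sq (d : ℕ) (hd : 2 ≤ d) (L : ℕ) (hL : 1 ≤ L) :
    (∫ t in (-1 : ℝ)..1, R d L t ^ 2 * t ^ 2 * (1 - t ^ 2) ^ ((d : ℝ) / 2 - 1)) =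
      (surfaceArea d / surfaceArea (d - 1)) *
        ((d : ℝ) * (L + 1) / (L * (d + 2 * L + 1)) +
          ((d : ℝ) + 4 * L - 2) / ((d : ℝ) + 2 * L - 1)) *
        (Nat.choose (d + L - 1) d : ℝ) := by
  obtain ⟨e, rfl⟩ := Nat.exists_eq_add_of_le' hd
  obtain ⟨m, rfl⟩ := Nat.exists_eq_add_of_le' hL
  have h := LL_main e m
  rw [final_alg, LL_one, LL_apply] at h
  have h1 : e + 2 - 1 = e + 1 := by omega
  have h2 : e + 2 + (m + 1) - 1 = m + e + 2 := by omega
  rw [h1, h2]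
  push_cast
  rw [mul_assoc, ← h]
  apply intervalIntegral.integral_congr
  intro t _
  simp only [wt, Polynomial.eval_pow, Polynomial.eval_mul, Polynomial.eval_X, RP_eval]
  rw [show ((e : ℝ) + 2) / 2 - 1 = (e : ℝ) / 2 by ring]
  ring
end

section
/- The continuous s-energy of the normalized surface measure on S^d satisfies, for s < d: ∫∫ ‖x−y‖^{−s} dσ_d(x) dσ_d(y) = 2^{d−s−1} Γ((d+1)/2) Γ((d−s)/2) / (√π Γ(d − s/2)). -/
open MeasureTheory Metric Real

/-- The normalized (probability) surface measure on the unit sphere `S^d ⊂ ℝ^{d+1}`. -/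
noncomputable def uniformSphere (d : ℕ) :
    Measure (sphere (0 : EuclideanSpace ℝ (Fin (d + 1))) 1) :=
  ((volume : Measure (EuclideanSpace ℝ (Fin (d + 1)))).toSphere Set.univ)⁻¹ •
    (volume : Measure (EuclideanSpace ℝ (Fin (d + 1)))).toSphere


lemma aux_gamma {b r : ℝ} (hb : 0 < b) (hr : 0 < r) :
    ∫⁻ p in Set.Ioi (0:ℝ), ENNReal.ofReal (p ^ (b - 1) * exp (-(r * p)))
      = ENNReal.ofReal ((1 / r) ^ b * Gamma b) := by
  have h := integral_rpow_mul_exp_neg_mul_Ioi hb hr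
  rw [← h, ofReal_integral_eq_lintegral_ofReal]
  · apply Integrable.of_integral_ne_zero
    rw [h]
    have := Gamma_pos_of_pos hb
    positivity
  · filter_upwards [ae_restrict_mem measurableSet_Ioi] with p hp
    have : (0:ℝ) < p := hp
    simp only [Pi.zero_apply]
    positivity

lemma aux_gauss (d : ℕ) {b : ℝ} (hb : 0 < b) :
    ∫⁻ u : EuclideanSpace ℝ (Fin d), ENNReal.ofReal (exp (-b * ‖u‖ ^ 2))
      = ENNReal.ofReal ((π / b) ^ ((d:ℝ) / 2)) := by
  have h := GaussianFourier.integral_rexp_neg_mul_sq_norm (V := EuclideanSpace ℝ (Fin d)) hb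
  rw [finrank_euclideanSpace_fin] at h
  rw [← h, ofReal_integral_eq_lintegral_ofReal]
  · apply Integrable.of_integral_ne_zero
    rw [h]
    positivity
  · filter_upwards with p
    simp only [Pi.zero_apply]
    positivity

lemma aux_sub {ρ : ℝ} (hρ : 0 < ρ) (a : ℝ) :
    ∫⁻ t : ℝ, ENNReal.ofReal ((√(t ^ 2 + ρ ^ 2) - t) ^ (-a) *
        (exp (-√(t ^ 2 + ρ ^ 2)) / √(t ^ 2 + ρ ^ 2)))
      = ∫⁻ p in Set.Ioi (0:ℝ), ENNReal.ofReal (p ^ (-a - 1) * exp (-(1 / 2 * p))) *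
          ENNReal.ofReal (exp (-(1 / (2 * p)) * ρ ^ 2)) := by
  have himg : (fun p : ℝ => (ρ ^ 2 / p - p) / 2) '' Set.Ioi 0 = Set.univ := by
    apply Set.eq_univ_of_forall
    intro t
    have h1 : √(t ^ 2 + ρ ^ 2) ^ 2 = t ^ 2 + ρ ^ 2 := sq_sqrt (by positivity)
    have h2 : t < √(t ^ 2 + ρ ^ 2) := by
      apply lt_sqrt_of_sq_lt
      nlinarith
    refine ⟨√(t ^ 2 + ρ ^ 2) - t, sub_pos.2 h2, ?_⟩
    have h3 : √(t ^ 2 + ρ ^ 2) - t ≠ 0 := (sub_pos.2 h2).ne'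
    simp only
    field_simp
    nlinarith
  have hr : ∀ p : ℝ, 0 < p → √(((ρ ^ 2 / p - p) / 2) ^ 2 + ρ ^ 2) = (ρ ^ 2 / p + p) / 2 := by
    intro p hp
    rw [show ((ρ ^ 2 / p - p) / 2) ^ 2 + ρ ^ 2 = ((ρ ^ 2 / p + p) / 2) ^ 2 by field_simp; ring]
    exact sqrt_sq (by positivity)
  rw [← setLIntegral_univ, ← himg, lintegral_image_eq_lintegral_abs_deriv_mul
    (f' := fun p => (-(ρ ^ 2 / p ^ 2) - 1) / 2) measurableSet_Ioi]
  · apply setLIntegral_congr_fun measurableSet_Ioi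
    intro p hp
    have hp : (0:ℝ) < p := hp
    simp only
    rw [hr p hp, ← ENNReal.ofReal_mul (abs_nonneg _), ← ENNReal.ofReal_mul (by positivity)]
    congr 1
    rw [show (-(ρ ^ 2 / p ^ 2) - 1) / 2 = -((ρ ^ 2 / p ^ 2 + 1) / 2) by ring, abs_neg,
      abs_of_pos (by positivity), show (ρ ^ 2 / p + p) / 2 - (ρ ^ 2 / p - p) / 2 = p by ring,
      rpow_sub_one hp.ne', mul_assoc (_ / _), ← exp_add,
      show -(1 / 2 * p) + -(1 / (2 * p)) * ρ ^ 2 = -((ρ ^ 2 / p + p) / 2) by field_simp; ring]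
    field_simp
  · intro p hp
    have hp : p ≠ 0 := ne_of_gt hp
    have := ((((hasDerivAt_inv hp).const_mul (ρ ^ 2)).sub (hasDerivAt_id p)).div_const 2)
    refine HasDerivAt.hasDerivWithinAt ?_
    convert! this using 1
    field_simp
  · intro p hp q hq h
    have hp : (0:ℝ) < p := hp
    have hq : (0:ℝ) < q := hq
    have h2 := hr p hp
    simp only at h
    rw [h, hr q hq] at h2
    linarith

lemma aux_split (d : ℕ) (F : ℝ → ℝ → ENNReal) (hF : Measurable (Function.uncurry F)) :
    ∫⁻ v : EuclideanSpace ℝ (Fin (d + 1)), F ‖v‖ (v 0)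
      = ∫⁻ u : EuclideanSpace ℝ (Fin d), ∫⁻ t : ℝ, F (√(t ^ 2 + ‖u‖ ^ 2)) t := by
  rw [← (PiLp.volume_preserving_toLp (Fin (d+1))).lintegral_comp_emb
    (MeasurableEquiv.toLp 2 _).measurableEmbedding,
    ← (PiLp.volume_preserving_toLp (Fin d)).lintegral_comp_emb
    (MeasurableEquiv.toLp 2 _).measurableEmbedding,
    ← (volume_preserving_piFinSuccAbove (fun _ : Fin (d + 1) => ℝ) 0).symm.lintegral_comp_emb
    (MeasurableEquiv.measurableEmbedding _), Measure.volume_eq_prod, lintegral_prod_symm]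
  · apply lintegral_congr; intro u
    apply lintegral_congr; intro t
    simp [EuclideanSpace.norm_eq, Fin.sum_univ_succ, MeasurableEquiv.piFinSuccAbove]
    rw [sq_sqrt (by positivity)]
  · apply Measurable.aemeasurable
    refine hF.comp (f := fun z : ℝ × (Fin d → ℝ) => (‖WithLp.toLp 2 ((MeasurableEquiv.piFinSuccAbove (fun _ : Fin (d + 1) => ℝ) 0).symm z)‖, (WithLp.toLp 2 ((MeasurableEquiv.piFinSuccAbove (fun _ : Fin (d + 1) => ℝ) 0).symm z)) 0)) ?_
    have := (MeasurableEquiv.piFinSuccAbove (fun _ : Fin (d + 1) => ℝ) 0).symm.measurable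
    fun_prop

lemma aux_B (d : ℕ) (hd : 1 ≤ d) (a : ℝ) (ha : a < d / 2) :
    ∫⁻ v : EuclideanSpace ℝ (Fin (d + 1)),
      ENNReal.ofReal ((‖v‖ - v 0) ^ (-a) * (exp (-‖v‖) / ‖v‖))
      = ENNReal.ofReal ((2 * π) ^ ((d:ℝ) / 2) * (2 ^ ((d:ℝ) / 2 - a) * Gamma (d / 2 - a))) := by
  rw [aux_split d (fun r t => ENNReal.ofReal ((r - t) ^ (-a) * (exp (-r) / r))) (by
    unfold Function.uncurry; fun_prop)]
  have : Nonempty (Fin d) := ⟨⟨0, hd⟩⟩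
  have hne : ∀ᵐ u : EuclideanSpace ℝ (Fin d), u ≠ 0 := by
    simp [ae_iff]
  have h1 : ∀ᵐ u : EuclideanSpace ℝ (Fin d), _ = _ := hne.mono
    fun u hu => aux_sub (norm_pos_iff.2 hu) a
  rw [lintegral_congr_ae h1, lintegral_lintegral_swap]
  · have : ∀ p ∈ Set.Ioi (0:ℝ), ∫⁻ u : EuclideanSpace ℝ (Fin d),
        ENNReal.ofReal (p ^ (-a - 1) * exp (-(1 / 2 * p))) *
          ENNReal.ofReal (exp (-(1 / (2 * p)) * ‖u‖ ^ 2))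
        = ENNReal.ofReal ((2 * π) ^ ((d:ℝ) / 2)) *
          ENNReal.ofReal (p ^ ((d / 2 - a) - 1) * exp (-(1 / 2 * p))) := by
      intro p hp
      have hp : (0:ℝ) < p := hp
      rw [lintegral_const_mul _ (by fun_prop), aux_gauss d (by positivity),
        ← ENNReal.ofReal_mul (by positivity), ← ENNReal.ofReal_mul (by positivity)]
      congr 1
      rw [show π / (1 / (2 * p)) = 2 * π * p by field_simp, mul_rpow (by positivity) hp.le,
        show (d:ℝ) / 2 - a - 1 = (-a - 1) + d / 2 by ring, rpow_add hp]
      ring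
    rw [setLIntegral_congr_fun measurableSet_Ioi this, lintegral_const_mul _ (by fun_prop),
      aux_gamma (by linarith) (by norm_num), ← ENNReal.ofReal_mul (by positivity)]
    norm_num
  · apply Measurable.aemeasurable
    unfold Function.uncurry
    fun_prop

lemma aux_B' (d : ℕ) (hd : 1 ≤ d) (a : ℝ) (ha : a < d / 2) (e : EuclideanSpace ℝ (Fin (d + 1)))
    (he : ‖e‖ = 1) :
    ∫⁻ v : EuclideanSpace ℝ (Fin (d + 1)),
      ENNReal.ofReal ((‖v‖ - inner ℝ e v) ^ (-a) * (exp (-‖v‖) / ‖v‖))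
      = ENNReal.ofReal ((2 * π) ^ ((d:ℝ) / 2) * (2 ^ ((d:ℝ) / 2 - a) * Gamma (d / 2 - a))) := by
  obtain ⟨b, hb⟩ := Orthonormal.exists_orthonormalBasis_extension_of_card_eq (𝕜 := ℝ)
    (E := EuclideanSpace ℝ (Fin (d + 1))) (ι := Fin (d + 1)) (by simp) (v := fun _ => e) (s := {0})
    (by
      constructor
      · intro i; simpa using he
      · intro i j hij
        exact absurd (Subsingleton.elim i j) hij)
  rw [← aux_B d hd a ha]
  symm
  rw [← b.repr.measurePreserving.lintegral_comp_emb
    b.repr.toHomeomorph.measurableEmbedding]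
  apply lintegral_congr; intro v
  rw [LinearIsometryEquiv.norm_map, b.repr_apply_apply, hb 0 rfl]

lemma aux_A (d : ℕ) (hd : 1 ≤ d) (a : ℝ) (ha : a < d / 2) (e : EuclideanSpace ℝ (Fin (d + 1)))
    (he : ‖e‖ = 1) :
    ∫⁻ v : EuclideanSpace ℝ (Fin (d + 1)),
      ENNReal.ofReal ((‖v‖ - inner ℝ e v) ^ (-a) * (exp (-‖v‖) / ‖v‖))
      = (∫⁻ y : sphere (0 : EuclideanSpace ℝ (Fin (d + 1))) 1,
          ENNReal.ofReal ((1 - inner ℝ e (y : EuclideanSpace ℝ (Fin (d + 1)))) ^ (-a))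
          ∂(volume : Measure (EuclideanSpace ℝ (Fin (d + 1)))).toSphere)
        * ENNReal.ofReal (Gamma (d - a)) := by
  have hd' : (1:ℝ) ≤ d := by exact_mod_cast hd
  have h0 : ∀ f : EuclideanSpace ℝ (Fin (d + 1)) → ENNReal,
      ∫⁻ v, f v = ∫⁻ v in {0}ᶜ, f v := by
    intro f; rw [restrict_compl_singleton]
  rw [h0, ← lintegral_subtype_comap (measurableSet_singleton _).compl]
  rw [← ((volume : Measure (EuclideanSpace ℝ (Fin (d + 1)))).measurePreserving_homeomorphUnitSphereProd.symm
    (homeomorphUnitSphereProd _).toMeasurableEquiv).lintegral_comp_emb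
    (MeasurableEquiv.measurableEmbedding _)]
  have : ∀ z : sphere (0 : EuclideanSpace ℝ (Fin (d + 1))) 1 × Set.Ioi (0:ℝ),
      ENNReal.ofReal ((‖(((homeomorphUnitSphereProd (EuclideanSpace ℝ (Fin (d + 1)))).toMeasurableEquiv.symm z : _) : EuclideanSpace ℝ (Fin (d + 1)))‖ - inner ℝ e (((homeomorphUnitSphereProd (EuclideanSpace ℝ (Fin (d + 1)))).toMeasurableEquiv.symm z : _) : EuclideanSpace ℝ (Fin (d + 1)))) ^ (-a) *
        (exp (-‖(((homeomorphUnitSphereProd (EuclideanSpace ℝ (Fin (d + 1)))).toMeasurableEquiv.symm z : _) : EuclideanSpace ℝ (Fin (d + 1)))‖) / ‖(((homeomorphUnitSphereProd (EuclideanSpace ℝ (Fin (d + 1)))).toMeasurableEquiv.symm z : _) : EuclideanSpace ℝ (Fin (d + 1)))‖))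
      = ENNReal.ofReal ((1 - inner ℝ e (z.1 : EuclideanSpace ℝ (Fin (d + 1)))) ^ (-a)) *
        ENNReal.ofReal ((z.2:ℝ) ^ (-a) * (exp (-z.2) / z.2)) := by
    rintro ⟨y, r, hr⟩
    have hr : (0:ℝ) < r := hr
    have hy : ‖(y : EuclideanSpace ℝ (Fin (d + 1)))‖ = 1 := by simp
    have h1 : (((homeomorphUnitSphereProd (EuclideanSpace ℝ (Fin (d + 1)))).toMeasurableEquiv.symm (y, ⟨r, hr⟩) : _) : EuclideanSpace ℝ (Fin (d + 1))) = r • (y : EuclideanSpace ℝ (Fin (d + 1))) :=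
      homeomorphUnitSphereProd_symm_apply_coe _ _
    have h2 : inner ℝ e (y : EuclideanSpace ℝ (Fin (d + 1))) ≤ 1 := by
      simpa [he, hy] using real_inner_le_norm e (y : EuclideanSpace ℝ (Fin (d + 1)))
    have h3 : 0 ≤ 1 - inner ℝ e (y : EuclideanSpace ℝ (Fin (d + 1))) := by linarith
    rw [h1, norm_smul, hy, inner_smul_right, ← ENNReal.ofReal_mul (by positivity)]
    simp only [norm_eq_abs, abs_of_pos hr, mul_one]
    rw [show r - r * inner ℝ e (y : EuclideanSpace ℝ (Fin (d + 1))) = (1 - inner ℝ e (y : EuclideanSpace ℝ (Fin (d + 1)))) * r by ring, mul_rpow h3 hr.le, mul_assoc]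
  rw [lintegral_congr this, lintegral_prod_mul
    (f := fun y : sphere (0 : EuclideanSpace ℝ (Fin (d + 1))) 1 =>
      ENNReal.ofReal ((1 - inner ℝ e (y : EuclideanSpace ℝ (Fin (d + 1)))) ^ (-a)))
    (g := fun r : Set.Ioi (0:ℝ) => ENNReal.ofReal ((r:ℝ) ^ (-a) * (exp (-r) / r)))
    (by fun_prop) (by fun_prop)]
  congr 1
  rw [finrank_euclideanSpace_fin, Nat.add_sub_cancel, Measure.volumeIoiPow,
    lintegral_withDensity_eq_lintegral_mul _ (by fun_prop) (by fun_prop)]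
  simp only [Pi.mul_apply]
  rw [lintegral_subtype_comap measurableSet_Ioi (fun r : ℝ => ENNReal.ofReal (r ^ d) * ENNReal.ofReal (r ^ (-a) * (exp (-r) / r)))]
  have h := aux_gamma (b := d - a) (r := 1) (by linarith) one_pos
  simp only [div_one, one_rpow, one_mul] at h
  rw [← h]
  apply setLIntegral_congr_fun measurableSet_Ioi
  intro r hr
  have hr : (0:ℝ) < r := hr
  simp only
  rw [← ENNReal.ofReal_mul (by positivity), sub_eq_add_neg (d:ℝ) a, rpow_sub_one hr.ne', rpow_add hr, rpow_natCast]
  congr 1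
  field_simp

lemma aux_C (d : ℕ) (hd : 1 ≤ d) (a : ℝ) (ha : a < d / 2) (e : EuclideanSpace ℝ (Fin (d + 1)))
    (he : ‖e‖ = 1) :
    ∫ y : sphere (0 : EuclideanSpace ℝ (Fin (d + 1))) 1,
        (1 - inner ℝ e (y : EuclideanSpace ℝ (Fin (d + 1)))) ^ (-a)
          ∂(volume : Measure (EuclideanSpace ℝ (Fin (d + 1)))).toSphere
      = (2 * π) ^ ((d:ℝ) / 2) * (2 ^ ((d:ℝ) / 2 - a) * Gamma (d / 2 - a)) / Gamma (d - a) := by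
  have hd' : (1:ℝ) ≤ d := by exact_mod_cast hd
  have hG : 0 < Gamma (d - a) := Gamma_pos_of_pos (by linarith)
  have hG' : 0 < Gamma (d / 2 - a) := Gamma_pos_of_pos (by linarith)
  have h := aux_A d hd a ha e he
  rw [aux_B' d hd a ha e he] at h
  rw [integral_eq_lintegral_of_nonneg_ae, eq_div_iff hG.ne']
  · have := congrArg ENNReal.toReal h
    rw [ENNReal.toReal_mul, ENNReal.toReal_ofReal hG.le, ENNReal.toReal_ofReal (by positivity)] at this
    exact this.symm
  · filter_upwards with y
    have hy : ‖(y : EuclideanSpace ℝ (Fin (d + 1)))‖ = 1 := by simp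
    have h2 : inner ℝ e (y : EuclideanSpace ℝ (Fin (d + 1))) ≤ 1 := by
      simpa [he, hy] using real_inner_le_norm e (y : EuclideanSpace ℝ (Fin (d + 1)))
    exact rpow_nonneg (by linarith) _
  · apply Measurable.aestronglyMeasurable
    fun_prop

theorem continuous_s_energy_sphere (d : ℕ) (hd : 1 ≤ d) (s : ℝ) (hs : s < d) :
    ∫ x, ∫ y, ‖(x : EuclideanSpace ℝ (Fin (d + 1))) - (y : EuclideanSpace ℝ (Fin (d + 1)))‖ ^ (-s)
      ∂(uniformSphere d) ∂(uniformSphere d) =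
      2 ^ ((d : ℝ) - s - 1) * Real.Gamma (((d : ℝ) + 1) / 2) * Real.Gamma (((d : ℝ) - s) / 2) /
        (Real.sqrt Real.pi * Real.Gamma ((d : ℝ) - s / 2)) := by
  have hd' : (1:ℝ) ≤ d := by exact_mod_cast hd
  set μ := (volume : Measure (EuclideanSpace ℝ (Fin (d + 1)))).toSphere with hμ
  have hprob : IsProbabilityMeasure (uniformSphere d) := by
    constructor
    rw [uniformSphere, Measure.smul_apply, smul_eq_mul]
    apply ENNReal.inv_mul_cancel
    · rw [Ne, Measure.measure_univ_eq_zero]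
      exact Measure.toSphere_ne_zero _
    · exact measure_ne_top _ _
  have hmass : (μ Set.univ).toReal
      = (2 * π) ^ ((d:ℝ) / 2) * (2 ^ ((d:ℝ) / 2) * Gamma (d / 2)) / Gamma d := by
    have := aux_C d hd 0 (by positivity) (EuclideanSpace.single 0 1) (by simp)
    simpa [measureReal_def, hμ] using this
  have hin : ∀ x : sphere (0 : EuclideanSpace ℝ (Fin (d + 1))) 1,
      ∫ y, ‖(x : EuclideanSpace ℝ (Fin (d + 1))) - (y : EuclideanSpace ℝ (Fin (d + 1)))‖ ^ (-s)
        ∂(uniformSphere d) =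
      2 ^ ((d : ℝ) - s - 1) * Real.Gamma (((d : ℝ) + 1) / 2) * Real.Gamma (((d : ℝ) - s) / 2) /
        (Real.sqrt Real.pi * Real.Gamma ((d : ℝ) - s / 2)) := by
    intro x
    have hx : ‖(x : EuclideanSpace ℝ (Fin (d + 1)))‖ = 1 := by simp
    have hpt : ∀ y : sphere (0 : EuclideanSpace ℝ (Fin (d + 1))) 1,
        ‖(x : EuclideanSpace ℝ (Fin (d + 1))) - (y : EuclideanSpace ℝ (Fin (d + 1)))‖ ^ (-s)
        = 2 ^ (-(s / 2)) * (1 - inner ℝ (x : EuclideanSpace ℝ (Fin (d + 1)))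
            (y : EuclideanSpace ℝ (Fin (d + 1)))) ^ (-(s / 2)) := by
      intro y
      have hy : ‖(y : EuclideanSpace ℝ (Fin (d + 1)))‖ = 1 := by simp
      have h2 : inner ℝ (x : EuclideanSpace ℝ (Fin (d + 1)))
          (y : EuclideanSpace ℝ (Fin (d + 1))) ≤ 1 := by
        simpa [hx, hy] using real_inner_le_norm (x : EuclideanSpace ℝ (Fin (d + 1)))
          (y : EuclideanSpace ℝ (Fin (d + 1)))
      have h3 := norm_sub_sq_real (x : EuclideanSpace ℝ (Fin (d + 1)))
        (y : EuclideanSpace ℝ (Fin (d + 1)))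
      rw [hx, hy] at h3
      rw [← mul_rpow (by norm_num) (by linarith),
        show -s = (2:ℕ) * (-(s / 2)) by push_cast; ring, rpow_mul (norm_nonneg _), rpow_natCast, h3]
      congr 1
      ring
    simp only [hpt]
    rw [integral_const_mul, uniformSphere, integral_smul_measure,
      aux_C d hd (s / 2) (by linarith) _ hx, ENNReal.toReal_inv, ← hμ, hmass, smul_eq_mul]
    have hdup := Real.Gamma_mul_Gamma_add_half ((d:ℝ) / 2)
    rw [show 2 * ((d:ℝ) / 2) = d by ring, show (d:ℝ) / 2 + 1 / 2 = (d + 1) / 2 by ring] at hdup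
    have g1 : 0 < Gamma ((d:ℝ) / 2) := Gamma_pos_of_pos (by positivity)
    have g2 : 0 < Gamma (d:ℝ) := Gamma_pos_of_pos (by positivity)
    have g3 : 0 < Gamma ((d:ℝ) - s / 2) := Gamma_pos_of_pos (by linarith)
    rw [show ((d:ℝ) - s) / 2 = d / 2 - s / 2 by ring]
    have e1 : (2:ℝ) ^ ((d:ℝ) - s - 1) = 2 ^ (-(s / 2)) * 2 ^ (-(s / 2)) / 2 ^ (1 - (d:ℝ)) := by
      rw [← rpow_add two_pos, ← rpow_sub two_pos]; congr 1; ring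
    have e2 : Gamma (((d:ℝ) + 1) / 2) = Gamma d * 2 ^ (1 - (d:ℝ)) * √π / Gamma ((d:ℝ) / 2) := by
      rw [eq_div_iff g1.ne', ← hdup]; ring
    rw [e1, e2, sub_eq_add_neg ((d:ℝ) / 2), rpow_add two_pos]
    have p1 : (0:ℝ) < (2 * π) ^ ((d:ℝ) / 2) := by positivity
    have p2 : (0:ℝ) < 2 ^ ((d:ℝ) / 2) := by positivity
    have p3 : (0:ℝ) < 2 ^ (1 - (d:ℝ)) := by positivity
    have p4 : (0:ℝ) < √π := by positivity
    generalize (2 * π) ^ ((d:ℝ) / 2) = A at *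
    generalize (2:ℝ) ^ ((d:ℝ) / 2) = B at *
    generalize (2:ℝ) ^ (1 - (d:ℝ)) = C at *
    generalize (2:ℝ) ^ (-(s / 2)) = D at *
    generalize √π = P at *
    field_simp
  simp only [hin]
  simp
end
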